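/- Let 𝕄 = ⟨M, 𝒞⟩ be a countable transitive model of GB⁻. If ℙ is a pretame notion of class forcing for 𝕄, then no proper class X of 𝕄 is turned into a set by forcing with ℙ. -/

import Mathlib

noncomputable section

namespace CF

open scoped ZFSet

attribute [local instance] Classical.propDecidable

/-! ### First-order formulas of the language of set theory -/

/-- First-order `∈`-formulas with variables indexed by `ℕ`. -/
inductive EFormula : Type
  | mem : ℕ → ℕ → EFormula
  | eq : ℕ → ℕ → EFormula
  | not : EFormula → EFormula
  | or : EFormula → EFormula → EFormula
  | ex : ℕ → EFormula → EFormula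

/-- Satisfaction of an `∈`-formula in the structure `⟨D, ∈⟩` under assignment `v`. -/
def EFormula.Sat (D : Set ZFSet) (v : ℕ → ZFSet) : EFormula → Prop
  | .mem i j => v i ∈ v j
  | .eq i j => v i = v j
  | .not φ => ¬ EFormula.Sat D v φ
  | .or φ ψ => EFormula.Sat D v φ ∨ EFormula.Sat D v ψ
  | .ex i φ => ∃ x ∈ D, EFormula.Sat D (Function.update v i x) φ

/-- All variables occurring in the formula are `< m`. -/
def EFormula.VarsLt (m : ℕ) : EFormula → Prop
  | .mem i j => i < m ∧ j < m
  | .eq i j => i < m ∧ j < m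
  | .not φ => EFormula.VarsLt m φ
  | .or φ ψ => EFormula.VarsLt m φ ∧ EFormula.VarsLt m ψ
  | .ex i φ => i < m ∧ EFormula.VarsLt m φ

/-- First-order formulas of the two-sorted language of `GB⁻`: set variables indexed by `ℕ`,
class parameters indexed by `ℕ`, and only set quantifiers. -/
inductive GBFormula : Type
  | mem : ℕ → ℕ → GBFormula
  | eq : ℕ → ℕ → GBFormula
  | cls : ℕ → ℕ → GBFormula    -- `vᵢ ∈ C_j`
  | not : GBFormula → GBFormula
  | or : GBFormula → GBFormula → GBFormula
  | ex : ℕ → GBFormula → GBFormula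

/-- Satisfaction of a `GBFormula` with set quantifiers ranging over `Mset`,
class parameters `Cs` and set assignment `v`. -/
def GBFormula.Sat (Mset : Set ZFSet) (Cs : ℕ → Set ZFSet) (v : ℕ → ZFSet) : GBFormula → Prop
  | .mem i j => v i ∈ v j
  | .eq i j => v i = v j
  | .cls i j => v i ∈ Cs j
  | .not φ => ¬ GBFormula.Sat Mset Cs v φ
  | .or φ ψ => GBFormula.Sat Mset Cs v φ ∨ GBFormula.Sat Mset Cs v ψ
  | .ex i φ => ∃ x ∈ Mset, GBFormula.Sat Mset Cs (Function.update v i x) φ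

/-! ### Countable transitive models of GB⁻ -/

/-- A countable transitive second-order model `𝕄 = ⟨M, 𝒞⟩` of `GB⁻`:
`M` is transitive and countable, classes are subsets of `M`, sets are classes, and the axioms
of `GB⁻` hold (extensionality and foundation are automatic for `ZFSet`; the set axioms of `ZF⁻`
with separation and collection allowing class parameters, together with first-order class
comprehension, are listed). -/
structure GBModel.{u} where
  M : Set ZFSet.{u}
  Cls : Set (Set ZFSet)
  countable_M : M.Countable
  countable_Cls : Cls.Countable
  transitive : ∀ x ∈ M, ∀ y : ZFSet, y ∈ x → y ∈ M
  sets_are_classes : ∀ x ∈ M, x.toSet ∈ Cls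
  classes_sub : ∀ C ∈ Cls, C ⊆ M
  empty_mem : (∅ : ZFSet) ∈ M
  pair_mem : ∀ x ∈ M, ∀ y ∈ M, ({x, y} : ZFSet) ∈ M
  sUnion_mem : ∀ x ∈ M, (⋃₀ x : ZFSet) ∈ M
  omega_mem : ZFSet.omega ∈ M
  comprehension : ∀ (φ : GBFormula) (v : ℕ → ZFSet) (Cs : ℕ → Set ZFSet),
    (∀ n, v n ∈ M) → (∀ n, Cs n ∈ Cls) →
    {x : ZFSet | x ∈ M ∧ GBFormula.Sat M Cs (Function.update v 0 x) φ} ∈ Cls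
  separation : ∀ C ∈ Cls, ∀ a ∈ M, ∃ b ∈ M, ∀ x : ZFSet, x ∈ b ↔ x ∈ a ∧ x ∈ C
  collection : ∀ C ∈ Cls, ∀ a ∈ M,
    (∀ x : ZFSet, x ∈ a → ∃ y ∈ M, x.pair y ∈ C) →
    ∃ b ∈ M, ∀ x : ZFSet, x ∈ a → ∃ y : ZFSet, y ∈ b ∧ x.pair y ∈ C

/-- A notion of class forcing `ℙ = ⟨P, ≤_ℙ⟩` for `𝕄`: a partial order (with maximal element
`𝟙_ℙ`) whose domain and order relation are classes of `𝕄`. -/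
structure ClassForcing (𝕄 : GBModel) where
  P : Set ZFSet
  le : ZFSet → ZFSet → Prop
  one : ZFSet
  one_mem : one ∈ P
  le_one : ∀ p ∈ P, le p one
  le_refl : ∀ p ∈ P, le p p
  le_trans : ∀ p q r : ZFSet, le p q → le q r → le p r
  P_cls : P ∈ 𝕄.Cls
  le_cls : {x : ZFSet | ∃ p ∈ P, ∃ q ∈ P, le p q ∧ x = p.pair q} ∈ 𝕄.Cls

/-! ### Names and their evaluation -/

/-- Auxiliary rank-bounded version of `IsName`. -/
def IsNameAux (S : Set ZFSet) (o : Ordinal) (σ : ZFSet) : Prop :=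
  ∀ x ∈ σ.toSet, ∃ τ p : ZFSet, x = τ.pair p ∧ p ∈ S ∧
    ∃ _h : τ.rank < o, IsNameAux S τ.rank τ
termination_by o

/-- `σ` is a `ℙ`-name (for the forcing with conditions `S`): every element of `σ` is a pair
`⟨τ, p⟩` with `τ` a `ℙ`-name and `p ∈ S`. -/
def IsName (S : Set ZFSet) (σ : ZFSet) : Prop := IsNameAux S σ.rank σ

/-- Image of a ZFSet under an arbitrary function (using choice for definability). -/
def zimage (f : ZFSet → ZFSet) (x : ZFSet) : ZFSet :=
  @ZFSet.image f (Classical.allZFSetDefinable _) x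

/-- Auxiliary rank-bounded version of the evaluation `σ^G` of a name by a filter. -/
def nameEvalAux (G : Set ZFSet) (o : Ordinal) (σ : ZFSet) : ZFSet :=
  zimage (fun τ => if h : τ.rank < o then nameEvalAux G τ.rank τ else ∅)
    (ZFSet.sep (fun τ => ∃ p, p ∈ G ∧ τ.pair p ∈ σ) (⋃₀ ⋃₀ σ))
termination_by o
decreasing_by exact h

/-- The evaluation `σ^G = {τ^G | ∃ p ∈ G, ⟨τ, p⟩ ∈ σ}` of a name `σ` by a filter `G`. -/
def nameEval (G : Set ZFSet) (σ : ZFSet) : ZFSet := nameEvalAux G σ.rank σ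

/-- Auxiliary rank-bounded version of `nameTC`. -/
def nameTCAux (o : Ordinal) (σ : ZFSet) : Set ZFSet :=
  {x | ∃ τ p : ZFSet, τ.pair p ∈ σ ∧ (x = p ∨ ∃ _h : τ.rank < o, x ∈ nameTCAux τ.rank τ)}
termination_by o

/-- The set `tc(σ) = ⋃ {{p} ∪ tc(τ) | ⟨τ,p⟩ ∈ σ}` of conditions appearing in the transitive
closure of the name `σ`. -/
def nameTC (σ : ZFSet) : Set ZFSet := nameTCAux σ.rank σ

/-! ### Filters, genericity, generic extensions -/

/-- `G` is a filter on the partial order with domain `S` and ordering `le`. -/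
def IsFilterOn (S : Set ZFSet) (le : ZFSet → ZFSet → Prop) (G : Set ZFSet) : Prop :=
  G ⊆ S ∧ G.Nonempty ∧ (∀ p ∈ G, ∀ q ∈ S, le p q → q ∈ G) ∧
    ∀ p ∈ G, ∀ q ∈ G, ∃ r ∈ G, le r p ∧ le r q

/-- `D` is a dense subclass of the partial order `⟨S, le⟩`. -/
def DenseIn (S : Set ZFSet) (le : ZFSet → ZFSet → Prop) (D : Set ZFSet) : Prop :=
  D ⊆ S ∧ ∀ p ∈ S, ∃ q ∈ D, le q p

/-- `G` is a generic filter on `⟨S, le⟩` over `𝕄`: a filter meeting every dense subclass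
of `⟨S, le⟩` lying in `𝒞`. -/
def IsGeneric (𝕄 : GBModel) (S : Set ZFSet) (le : ZFSet → ZFSet → Prop) (G : Set ZFSet) : Prop :=
  IsFilterOn S le G ∧ ∀ D ∈ 𝕄.Cls, DenseIn S le D → (G ∩ D).Nonempty

/-- The generic extension `M[G] = {σ^G | σ ∈ M a name for the forcing with domain S}`. -/
def MGen (𝕄 : GBModel) (S : Set ZFSet) (G : Set ZFSet) : Set ZFSet :=
  {x | ∃ σ : ZFSet, σ ∈ 𝕄.M ∧ IsName S σ ∧ nameEval G σ = x}

/-! ### Compatibility, the set decision property -/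

/-- `p` and `q` are compatible in `⟨S, le⟩`. -/
def Compat (S : Set ZFSet) (le : ZFSet → ZFSet → Prop) (p q : ZFSet) : Prop :=
  ∃ r ∈ S, le r p ∧ le r q

/-- `p ≤* q` : every extension of `p` is compatible with `q`. -/
def leStar (S : Set ZFSet) (le : ZFSet → ZFSet → Prop) (p q : ZFSet) : Prop :=
  ∀ r ∈ S, le r p → Compat S le r q

/-- `p` decides the set of conditions `A`: for every `a ∈ A`, either `p ≤* a` or `p ⊥ a`. -/
def Decides (S : Set ZFSet) (le : ZFSet → ZFSet → Prop) (p A : ZFSet) : Prop :=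
  ∀ a : ZFSet, a ∈ A → leStar S le p a ∨ ¬ Compat S le p a

/-- The set decision property: every set of conditions in `M` is decided densely. -/
def SetDecisionProperty (𝕄 : GBModel) (F : ClassForcing 𝕄) : Prop :=
  ∀ p ∈ F.P, ∀ A : ZFSet, A ∈ 𝕄.M → (∀ a : ZFSet, a ∈ A → a ∈ F.P) →
    ∃ q ∈ F.P, F.le q p ∧ Decides F.P F.le q A

/-! ### The forcing theorem -/

/-- Encode a finite list of sets as a single set by iterated Kuratowski pairing. -/
def listEncode : List ZFSet → ZFSet
  | [] => ∅
  | a :: l => a.pair (listEncode l)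

/-- The assignment sending variable `n < m` to `σₙ^G` (and `∅` beyond `m`). -/
def namesAssign (G : Set ZFSet) (m : ℕ) (σs : Fin m → ZFSet) : ℕ → ZFSet :=
  fun n => if h : n < m then nameEval G (σs ⟨n, h⟩) else ∅

/-- `p ⊩_ℙ φ(σ₀, …, σ_{m-1})` : for every generic `G ∋ p`, `M[G] ⊨ φ(σ₀^G, …, σ_{m-1}^G)`. -/
def Forces (𝕄 : GBModel) (F : ClassForcing 𝕄) (φ : EFormula) (m : ℕ) (p : ZFSet)
    (σs : Fin m → ZFSet) : Prop :=
  ∀ G : Set ZFSet, IsGeneric 𝕄 F.P F.le G → p ∈ G →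
    EFormula.Sat (MGen 𝕄 F.P G) (namesAssign G m σs) φ

/-- `ℙ` satisfies the forcing theorem over `𝕄`: for every `∈`-formula `φ(v₀,…,v_{m-1})`,
the forcing relation is a class of `𝕄` (definability lemma) and everything true in a generic
extension is forced by a condition in the generic filter (truth lemma). -/
def SatisfiesForcingTheorem (𝕄 : GBModel) (F : ClassForcing 𝕄) : Prop :=
  ∀ (φ : EFormula) (m : ℕ), EFormula.VarsLt m φ →
    ({x : ZFSet | ∃ p ∈ F.P, ∃ σs : Fin m → ZFSet,
        (∀ i, σs i ∈ 𝕄.M ∧ IsName F.P (σs i)) ∧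
        Forces 𝕄 F φ m p σs ∧
        x = p.pair (listEncode (List.ofFn σs))} ∈ 𝕄.Cls) ∧
    ∀ σs : Fin m → ZFSet, (∀ i, σs i ∈ 𝕄.M ∧ IsName F.P (σs i)) →
      ∀ G : Set ZFSet, IsGeneric 𝕄 F.P F.le G →
        EFormula.Sat (MGen 𝕄 F.P G) (namesAssign G m σs) φ →
        ∃ p ∈ G, Forces 𝕄 F φ m p σs

/-! ### Complete subforcings, the set reduction property -/

/-- `A` is an antichain of the partial order `⟨S, le⟩`. -/
def IsAntichainIn (S : Set ZFSet) (le : ZFSet → ZFSet → Prop) (A : Set ZFSet) : Prop :=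
  A ⊆ S ∧ ∀ p ∈ A, ∀ q ∈ A, p ≠ q → ¬ Compat S le p q

/-- `A` is a maximal antichain of the partial order `⟨S, le⟩`. -/
def IsMaxAntichainIn (S : Set ZFSet) (le : ZFSet → ZFSet → Prop) (A : Set ZFSet) : Prop :=
  IsAntichainIn S le A ∧ ∀ p ∈ S, ∃ a ∈ A, Compat S le p a

/-- `ℚ ⊲∘ ℙ` : `Q` is a set-sized complete subforcing of `ℙ` (with the induced ordering):
`Q ∈ M`, `Q ⊆ P`, `𝟙 ∈ Q`, and every maximal antichain of `ℚ` in `M` is predense in `ℙ`. -/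
def IsCompleteSub (𝕄 : GBModel) (F : ClassForcing 𝕄) (Q : ZFSet) : Prop :=
  Q ∈ 𝕄.M ∧ Q.toSet ⊆ F.P ∧ F.one ∈ Q ∧
    ∀ A : ZFSet, A ∈ 𝕄.M → A.toSet ⊆ Q.toSet → IsMaxAntichainIn Q.toSet F.le A.toSet →
      ∀ p ∈ F.P, ∃ a : ZFSet, a ∈ A ∧ Compat F.P F.le p a

/-- `ℚ^{∥q}` : the conditions of `Q` compatible with `q` in `ℙ`. -/
def QPar (𝕄 : GBModel) (F : ClassForcing 𝕄) (Q : ZFSet) (q : ZFSet) : Set ZFSet :=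
  {r | r ∈ Q ∧ Compat F.P F.le r q}

/-- The property `(*)(A, q, ℚ)`: for every `a ∈ A`, the set of `r ∈ ℚ^{∥q}` such that either
all `s ≤ q, r` satisfy `s ≤* a`, or all `s ≤ q, r` satisfy `s ⊥ a`, is dense in `ℚ^{∥q}`. -/
def StarProp (𝕄 : GBModel) (F : ClassForcing 𝕄) (A q Q : ZFSet) : Prop :=
  ∀ a : ZFSet, a ∈ A → ∀ r₀ ∈ QPar 𝕄 F Q q, ∃ r₁ ∈ QPar 𝕄 F Q q, F.le r₁ r₀ ∧
    ((∀ s ∈ F.P, F.le s q → F.le s r₁ → leStar F.P F.le s a) ∨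
      (∀ s ∈ F.P, F.le s q → F.le s r₁ → ¬ Compat F.P F.le s a))

/-- The set reduction property. -/
def SetReductionProperty (𝕄 : GBModel) (F : ClassForcing 𝕄) : Prop :=
  ∀ A : ZFSet, A ∈ 𝕄.M → (∀ a : ZFSet, a ∈ A → a ∈ F.P) →
    ∀ p ∈ F.P, ∃ q ∈ F.P, F.le q p ∧ ∃ Q : ZFSet, IsCompleteSub 𝕄 F Q ∧ StarProp 𝕄 F A q Q

/-- Every new set added by `ℙ` is added by a set-sized complete subforcing of `ℙ`. -/
def EveryNewSetBySub (𝕄 : GBModel) (F : ClassForcing 𝕄) : Prop :=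
  ∀ G : Set ZFSet, IsGeneric 𝕄 F.P F.le G →
    ∀ x : ZFSet, x ∈ MGen 𝕄 F.P G → x ∉ 𝕄.M →
      ∃ Q : ZFSet, IsCompleteSub 𝕄 F Q ∧ x ∈ MGen 𝕄 Q.toSet (G ∩ Q.toSet)

/-! ### The q-reduction of a name -/

/-- First component of a Kuratowski pair (junk value `∅` otherwise). -/
def fstZ (x : ZFSet) : ZFSet :=
  if h : ∃ a b : ZFSet, x = a.pair b then h.choose else ∅

/-- Second component of a Kuratowski pair (junk value `∅` otherwise). -/
def sndZ (x : ZFSet) : ZFSet :=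
  if h : ∃ a b : ZFSet, x = a.pair b then h.choose_spec.choose else ∅

/-- Cartesian product of two `ZFSet`s. -/
def zprod (a b : ZFSet) : ZFSet :=
  ZFSet.sep (fun x => ∃ u v : ZFSet, u ∈ a ∧ v ∈ b ∧ x = u.pair v)
    (ZFSet.powerset (ZFSet.powerset (a ∪ b)))

/-- Auxiliary rank-bounded version of the `q`-reduction of a name to `Q`. -/
def reduceAux (S : Set ZFSet) (le : ZFSet → ZFSet → Prop) (Q q : ZFSet) (o : Ordinal)
    (σ : ZFSet) : ZFSet :=
  zimage
    (fun x =>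
      (if h : (fstZ x).rank < o then reduceAux S le Q q (fstZ x).rank (fstZ x) else ∅).pair
        (sndZ x))
    (ZFSet.sep
      (fun x => ∃ τ r : ZFSet, x = τ.pair r ∧ r ∈ Q ∧
        ∃ a : ZFSet, τ.pair a ∈ σ ∧ ∀ s ∈ S, le s q → le s r → leStar S le s a)
      (zprod (⋃₀ ⋃₀ σ) Q))
termination_by o
decreasing_by exact h

/-- The `q`-reduction `σ_q^ℚ = {⟨τ_q^ℚ, r⟩ | r ∈ ℚ ∧ ∃a (⟨τ,a⟩ ∈ σ ∧ ∀ s ≤ q,r (s ≤* a))}`. -/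
def reduceName (S : Set ZFSet) (le : ZFSet → ZFSet → Prop) (Q q σ : ZFSet) : ZFSet :=
  reduceAux S le Q q σ.rank σ

/-! ### Projections -/

/-- `f` is a projection from `⟨S, le⟩` (with maximum `one`) onto the subforcing with domain
`Qs`, respecting `X`. -/
def IsProjectionResp (S : Set ZFSet) (le : ZFSet → ZFSet → Prop) (one : ZFSet)
    (Qs X : Set ZFSet) (f : ZFSet → ZFSet) : Prop :=
  (∀ p ∈ S, f p ∈ Qs) ∧
  f one = one ∧
  (∀ p ∈ S, ∀ q ∈ S, le p q → le (f p) (f q)) ∧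
  (∀ p ∈ S, ∀ q ∈ Qs, le q (f p) → ∃ r ∈ S, le r p ∧ le (f r) q) ∧
  (∀ p ∈ X, ∀ q ∈ S, le (f q) p → le q p) ∧
  (∀ p ∈ X, f p = p)

/-- `ℙ` is approachable by projections: there is a class `Π ∈ 𝒞` whose sections `π_{X,y}`
are such that for every set `X ⊆ ℙ` there are a set `y` and a set-sized subforcing `ℚ ⊇ X ∪ {𝟙}`
of `ℙ` with `π_{X,y} : ℙ → ℚ` a projection respecting `X`. -/
def ApproachableByProjections (𝕄 : GBModel) (F : ClassForcing 𝕄) : Prop :=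
  ∃ Pi ∈ 𝕄.Cls, ∀ X : ZFSet, X ∈ 𝕄.M → (∀ x : ZFSet, x ∈ X → x ∈ F.P) →
    ∃ y ∈ 𝕄.M, ∃ Q : ZFSet, Q ∈ 𝕄.M ∧ Q.toSet ⊆ F.P ∧ (∀ x : ZFSet, x ∈ X → x ∈ Q) ∧
      F.one ∈ Q ∧ ∃ f : ZFSet → ZFSet,
        (∀ u ∈ F.P, ∀ v : ZFSet, (f u = v ↔ X.pair (y.pair (u.pair v)) ∈ Pi)) ∧
        IsProjectionResp F.P F.le F.one Q.toSet X.toSet f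

/-- `p ⊩ σ ⊆ τ` for the forcing with domain `S` and ordering `le`. -/
def ForcesSubset (𝕄 : GBModel) (S : Set ZFSet) (le : ZFSet → ZFSet → Prop)
    (p σ τ : ZFSet) : Prop :=
  ∀ G : Set ZFSet, IsGeneric 𝕄 S le G → p ∈ G → nameEval G σ ⊆ nameEval G τ

/-! ### Bounded names, turning proper classes into sets -/

/-- The possible values of the name `σ` in generic extensions. -/
def PossibleValues (𝕄 : GBModel) (S : Set ZFSet) (le : ZFSet → ZFSet → Prop)
    (σ : ZFSet) : Set ZFSet :=
  {x | ∃ G : Set ZFSet, IsGeneric 𝕄 S le G ∧ nameEval G σ = x}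

/-- The name `σ` is bounded: some `A ∈ M` covers all its possible values lying in `M`. -/
def IsBoundedName (𝕄 : GBModel) (F : ClassForcing 𝕄) (σ : ZFSet) : Prop :=
  ∃ A ∈ 𝕄.M, PossibleValues 𝕄 F.P F.le σ ∩ 𝕄.M ⊆ A.toSet

/-- `ℙ` has bounded names: every `ℙ`-name in `M` is bounded. -/
def HasBoundedNames (𝕄 : GBModel) (F : ClassForcing 𝕄) : Prop :=
  ∀ σ : ZFSet, σ ∈ 𝕄.M → IsName F.P σ → IsBoundedName 𝕄 F σ

/-- `X` is a proper class of `𝕄`: a class of `𝕄` that is not (the extension of) a set of `𝕄`. -/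
def IsProperClass (𝕄 : GBModel) (X : Set ZFSet) : Prop :=
  X ∈ 𝕄.Cls ∧ ¬ ∃ x ∈ 𝕄.M, x.toSet = X

/-- The proper class `X` of `𝕄` is turned into a set by forcing with `ℙ`: some `ℙ`-name in `M`
evaluates to `X` under some generic filter. -/
def TurnsIntoSet (𝕄 : GBModel) (F : ClassForcing 𝕄) (X : Set ZFSet) : Prop :=
  ∃ σ : ZFSet, σ ∈ 𝕄.M ∧ IsName F.P σ ∧
    ∃ G : Set ZFSet, IsGeneric 𝕄 F.P F.le G ∧ (nameEval G σ).toSet = X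

/-! ### Functions and partial functions as sets, collapse forcings -/

/-- `p` is a partial function from (a subset of) `γ` into the class `Y`. -/
def IsPFunOn (p γ : ZFSet) (Y : Set ZFSet) : Prop :=
  (∀ x : ZFSet, x ∈ p → ∃ a b : ZFSet, x = a.pair b ∧ a ∈ γ ∧ b ∈ Y) ∧
  ∀ a b b' : ZFSet, a.pair b ∈ p → a.pair b' ∈ p → b = b'

/-- The domain of a set of pairs. -/
def pdom (p : ZFSet) : Set ZFSet := {a | ∃ b : ZFSet, a.pair b ∈ p}

/-- `f` is (the graph of) an injective function from `X` into `Y`. -/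
def ZInjFun (f : ZFSet) (X Y : Set ZFSet) : Prop :=
  (∀ x : ZFSet, x ∈ f → ∃ a b : ZFSet, x = a.pair b ∧ a ∈ X ∧ b ∈ Y) ∧
  (∀ a b b' : ZFSet, a.pair b ∈ f → a.pair b' ∈ f → b = b') ∧
  (∀ a ∈ X, ∃ b : ZFSet, a.pair b ∈ f) ∧
  (∀ a a' b : ZFSet, a.pair b ∈ f → a'.pair b ∈ f → a = a')

/-- `D` has size less than the cardinality of `γ` in the sense of `M`:
no function of `M` injects `γ` into `D`. -/
def SmallerThan (𝕄 : GBModel) (γ : ZFSet) (D : Set ZFSet) : Prop :=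
  ¬ ∃ f ∈ 𝕄.M, ZInjFun f γ.toSet D

/-- Conditions of `Col(γ, Y)^M`: partial functions of `M` from `γ` to `Y` whose domain has
size less than the cardinality of `γ` in `M`. -/
def ColCond (𝕄 : GBModel) (γ : ZFSet) (Y : Set ZFSet) (p : ZFSet) : Prop :=
  p ∈ 𝕄.M ∧ IsPFunOn p γ Y ∧ SmallerThan 𝕄 γ (pdom p)

/-- Conditions of `Col₋*(γ, Y)^M`: those conditions of `Col(γ, Y)^M` whose domain is
an ordinal. -/
def ColStarCond (𝕄 : GBModel) (γ : ZFSet) (Y : Set ZFSet) (p : ZFSet) : Prop :=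
  ColCond 𝕄 γ Y p ∧ ∃ β : ZFSet, β.IsOrdinal ∧ pdom p = β.toSet

/-- `f` is (the graph of) a function with domain `I`. -/
def ZFuncOn (f I : ZFSet) : Prop :=
  (∀ x : ZFSet, x ∈ f → ∃ a b : ZFSet, x = a.pair b ∧ a ∈ I) ∧
  (∀ a b b' : ZFSet, a.pair b ∈ f → a.pair b' ∈ f → b = b') ∧
  (∀ a : ZFSet, a ∈ I → ∃ b : ZFSet, a.pair b ∈ f)

/-- Application of a set-function to an argument (junk value `∅` if undefined). -/
def zapp (f i : ZFSet) : ZFSet :=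
  if h : ∃ b : ZFSet, i.pair b ∈ f then h.choose else ∅

/-! ### Pretameness -/

/-- `ℙ` is pretame for `𝕄`: for every `p ∈ ℙ`, `I ∈ M` and every `𝒞`-coded sequence
`⟨D_i | i ∈ I⟩` (coded as the class of pairs `⟨i, x⟩` with `x ∈ D_i`) of dense subclasses
of `ℙ`, there are `q ≤ p` and `⟨d_i | i ∈ I⟩ ∈ M` with `d_i ⊆ D_i` predense below `q`. -/
def Pretame (𝕄 : GBModel) (F : ClassForcing 𝕄) : Prop :=
  ∀ p ∈ F.P, ∀ I : ZFSet, I ∈ 𝕄.M → ∀ D ∈ 𝕄.Cls,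
    (∀ i : ZFSet, i ∈ I →
      (∀ x : ZFSet, i.pair x ∈ D → x ∈ F.P) ∧ ∀ r ∈ F.P, ∃ s : ZFSet, i.pair s ∈ D ∧ F.le s r) →
    ∃ q ∈ F.P, F.le q p ∧ ∃ d ∈ 𝕄.M, ZFuncOn d I ∧
      ∀ i : ZFSet, i ∈ I → (∀ x : ZFSet, x ∈ zapp d i → i.pair x ∈ D) ∧
        ∀ r ∈ F.P, F.le r q → ∃ a : ZFSet, a ∈ zapp d i ∧ Compat F.P F.le r a

/-! ### The specific forcings of Sections 6 and 7 -/

/-- Conditions of Definition 6.8: (not necessarily finite) partial functions from `ω` to `2`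
lying in `M`. -/
def PCond (𝕄 : GBModel) (p : ZFSet) : Prop :=
  p ∈ 𝕄.M ∧ IsPFunOn p ZFSet.omega {x : ZFSet | x = ∅ ∨ x = ({∅} : ZFSet)}

/-- Conditions of the finite support product `ℚ` of `ω` many copies of `ℙ`:
finite sequences `⟨p₀, …, p_k⟩` of `ℙ`-conditions. -/
def QCond (𝕄 : GBModel) (s : ZFSet) : Prop :=
  s ∈ 𝕄.M ∧ ∃ n : ZFSet, n ∈ ZFSet.omega ∧ ZFuncOn s n ∧
    ∀ i : ZFSet, i ∈ n → PCond 𝕄 (zapp s i)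

/-- The coordinatewise ordering on `ℚ`. -/
def QLe (s' s : ZFSet) : Prop :=
  pdom s ⊆ pdom s' ∧ ∀ i ∈ pdom s, zapp s i ⊆ zapp s' i

/-- The power class `𝒫(ω)^M`. -/
def PowOmega (𝕄 : GBModel) : Set ZFSet :=
  {x : ZFSet | x ∈ 𝕄.M ∧ x ⊆ ZFSet.omega}

/-- `X ⊆ M` is definable over `⟨M, ∈⟩` (from set parameters). -/
def DefinableOver (Mset : Set ZFSet) (X : Set ZFSet) : Prop :=
  ∃ (φ : EFormula) (v : ℕ → ZFSet), (∀ n, v n ∈ Mset) ∧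
    X = {x : ZFSet | x ∈ Mset ∧ EFormula.Sat Mset (Function.update v 0 x) φ}

/-- Every set of `M` is countable in `M`: it injects into `ω` by a function of `M`. -/
def AllSetsCountable (𝕄 : GBModel) : Prop :=
  ∀ x ∈ 𝕄.M, ∃ f ∈ 𝕄.M, ZInjFun f x.toSet ZFSet.omega.toSet


/-! ### Definability toolkit -/

section Helpers

universe u

/-- Shallow embedding of the relations definable over `𝕄`. -/
inductive Dfn (𝕄 : GBModel.{u}) : (n : ℕ) → ((Fin n → ZFSet.{u}) → Prop) → Prop
  | mem' {n : ℕ} (i j : Fin n) : Dfn 𝕄 n (fun v => v i ∈ v j)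
  | eq' {n : ℕ} (i j : Fin n) : Dfn 𝕄 n (fun v => v i = v j)
  | cls' {n : ℕ} (i : Fin n) (C : Set ZFSet.{u}) (hC : C ∈ 𝕄.Cls) : Dfn 𝕄 n (fun v => v i ∈ C)
  | not {n : ℕ} {R : (Fin n → ZFSet.{u}) → Prop} : Dfn 𝕄 n R → Dfn 𝕄 n (fun v => ¬ R v)
  | or {n : ℕ} {R S : (Fin n → ZFSet.{u}) → Prop} :
      Dfn 𝕄 n R → Dfn 𝕄 n S → Dfn 𝕄 n (fun v => R v ∨ S v)
  | ex' {n : ℕ} {R : (Fin (n + 1) → ZFSet.{u}) → Prop} :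
      Dfn 𝕄 (n + 1) R →
      Dfn 𝕄 n (fun v => ∃ x ∈ 𝕄.M, R (Fin.snoc (α := fun _ => ZFSet.{u}) v x))
  | congr {n : ℕ} {R S : (Fin n → ZFSet.{u}) → Prop} :
      Dfn 𝕄 n R → (∀ v, (∀ i, v i ∈ 𝕄.M) → (R v ↔ S v)) → Dfn 𝕄 n S

variable {𝕄 : GBModel.{u}}

theorem Dfn.sound {n : ℕ} {R : (Fin n → ZFSet.{u}) → Prop} (h : Dfn 𝕄 n R)
    (e : ℕ → Set ZFSet.{u}) (he : ∀ C ∈ 𝕄.Cls, ∃ k, e k = C) :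
    ∃ φ : GBFormula, ∀ v : ℕ → ZFSet.{u}, (∀ k, v k ∈ 𝕄.M) →
      (R (fun i => v i) ↔ GBFormula.Sat 𝕄.M e v φ) := by
  induction h with
  | mem' i j => exact ⟨.mem i j, fun v _ => Iff.rfl⟩
  | eq' i j => exact ⟨.eq i j, fun v _ => Iff.rfl⟩
  | cls' i C hC =>
    obtain ⟨k, rfl⟩ := he C hC
    exact ⟨.cls i k, fun v _ => Iff.rfl⟩
  | not _ ih =>
    obtain ⟨φ, hφ⟩ := ih
    exact ⟨.not φ, fun v hv => not_congr (hφ v hv)⟩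
  | or _ _ ih1 ih2 =>
    obtain ⟨φ, hφ⟩ := ih1
    obtain ⟨ψ, hψ⟩ := ih2
    exact ⟨.or φ ψ, fun v hv => or_congr (hφ v hv) (hψ v hv)⟩
  | @ex' n R _ ih =>
    obtain ⟨φ, hφ⟩ := ih
    refine ⟨.ex n φ, fun v hv => ?_⟩
    refine exists_congr fun x => and_congr_right fun hx => ?_
    have := hφ (Function.update v n x) (by
      intro k
      by_cases hk : k = n
      · subst hk; simpa using hx
      · simpa [Function.update_of_ne hk] using hv k)
    rw [← this]
    have e2 : (Fin.snoc (α := fun _ => ZFSet.{u}) (fun i : Fin n => v i) x)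
        = fun i : Fin (n + 1) => Function.update v n x i := by
      funext i
      refine Fin.lastCases ?_ (fun j => ?_) i
      · simp
      · have : (j : ℕ) ≠ n := j.isLt.ne
        simp [Function.update_of_ne this]
    rw [e2]
  | congr _ hRS ih =>
    obtain ⟨φ, hφ⟩ := ih
    exact ⟨φ, fun v hv => (hRS _ fun i => hv i).symm.trans (hφ v hv)⟩

theorem Dfn.ren {n : ℕ} {R : (Fin n → ZFSet.{u}) → Prop} (h : Dfn 𝕄 n R) :
    ∀ {m : ℕ} (f : Fin n → Fin m), Dfn 𝕄 m (fun w => R (fun i => w (f i))) := by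
  induction h with
  | mem' i j => exact fun f => .mem' _ _
  | eq' i j => exact fun f => .eq' _ _
  | cls' i C hC => exact fun f => .cls' _ _ hC
  | not _ ih => exact fun f => .not (ih f)
  | or _ _ ih1 ih2 => exact fun f => .or (ih1 f) (ih2 f)
  | @ex' n R _ ih =>
    intro m f
    have := Dfn.ex' (ih (fun i => Fin.lastCases (motive := fun _ => Fin (m + 1)) (Fin.last m)
      (fun j => (f j).castSucc) i))
    refine this.congr fun w _ => exists_congr fun x => and_congr_right fun _ => ?_
    have e2 : (Fin.snoc (α := fun _ => ZFSet.{u}) (fun i : Fin n => w (f i)) x)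
        = fun i : Fin (n + 1) => Fin.snoc (α := fun _ => ZFSet.{u}) w x
          (Fin.lastCases (motive := fun _ => Fin (m + 1)) (Fin.last m)
      (fun j => (f j).castSucc) i) := by
      funext i
      refine Fin.lastCases ?_ (fun j => ?_) i
      · simp
      · simp
    rw [e2]
  | congr _ hRS ih => exact fun f => (ih f).congr fun w hw => hRS _ fun i => hw _

theorem Dfn.to_cls {R : (Fin 1 → ZFSet.{u}) → Prop} (h : Dfn 𝕄 1 R) :
    {x | x ∈ 𝕄.M ∧ R (fun _ => x)} ∈ 𝕄.Cls := by
  obtain ⟨e, he⟩ := 𝕄.countable_Cls.exists_eq_range ⟨_, 𝕄.sets_are_classes _ 𝕄.empty_mem⟩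
  obtain ⟨φ, hφ⟩ := h.sound e (by rw [he]; exact fun C hC => hC)
  have := 𝕄.comprehension φ (fun _ => ∅) e (fun _ => 𝕄.empty_mem)
    (fun k => by rw [he]; exact ⟨k, rfl⟩)
  convert this using 3 with x
  refine and_congr_right fun hx => ?_
  rw [← hφ]
  · apply iff_of_eq; congr 1; funext i
    have : (i : ℕ) = 0 := by omega
    simp [this]
  · intro k
    by_cases hk : k = 0
    · subst hk; simpa using hx
    · simpa [Function.update_of_ne hk] using 𝕄.empty_mem

theorem Dfn.and {n : ℕ} {R S : (Fin n → ZFSet.{u}) → Prop} (h1 : Dfn 𝕄 n R) (h2 : Dfn 𝕄 n S) :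
    Dfn 𝕄 n (fun v => R v ∧ S v) :=
  (h1.not.or h2.not).not.congr fun v _ => by tauto

theorem Dfn.imp {n : ℕ} {R S : (Fin n → ZFSet.{u}) → Prop} (h1 : Dfn 𝕄 n R) (h2 : Dfn 𝕄 n S) :
    Dfn 𝕄 n (fun v => R v → S v) :=
  (h1.not.or h2).congr fun v _ => by tauto

theorem Dfn.exM {n : ℕ} {S : (Fin n → ZFSet.{u}) → ZFSet.{u} → Prop}
    (h : Dfn 𝕄 (n + 1) (fun w => S (fun i => w i.castSucc) (w (Fin.last n)))) :
    Dfn 𝕄 n (fun v => ∃ x ∈ 𝕄.M, S v x) :=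
  h.ex'.congr fun v _ => by simp

theorem Dfn.allM {n : ℕ} {S : (Fin n → ZFSet.{u}) → ZFSet.{u} → Prop}
    (h : Dfn 𝕄 (n + 1) (fun w => S (fun i => w i.castSucc) (w (Fin.last n)))) :
    Dfn 𝕄 n (fun v => ∀ x ∈ 𝕄.M, S v x) :=
  (Dfn.exM (S := fun v x => ¬ S v x) h.not).not.congr fun v _ => by
    push Not; rfl

/-- Definable terms. -/
def Tm (𝕄 : GBModel.{u}) (n : ℕ) (t : (Fin n → ZFSet.{u}) → ZFSet.{u}) : Prop :=
  (∀ v, (∀ i, v i ∈ 𝕄.M) → t v ∈ 𝕄.M) ∧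
    Dfn 𝕄 (n + 1) (fun w => w (Fin.last n) = t (fun i => w i.castSucc))

theorem Tm.subst {n : ℕ} {t : (Fin n → ZFSet.{u}) → ZFSet.{u}} (ht : Tm 𝕄 n t)
    {S : (Fin n → ZFSet.{u}) → ZFSet.{u} → Prop}
    (h : Dfn 𝕄 (n + 1) (fun w => S (fun i => w i.castSucc) (w (Fin.last n)))) :
    Dfn 𝕄 n (fun v => S v (t v)) :=
  (Dfn.exM (S := fun v x => x = t v ∧ S v x) (ht.2.and h)).congr fun v hv => by
    constructor
    · rintro ⟨x, _, rfl, h⟩; exact h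
    · exact fun h => ⟨_, ht.1 v hv, rfl, h⟩

theorem Tm.ren {n m : ℕ} {t : (Fin n → ZFSet.{u}) → ZFSet.{u}} (ht : Tm 𝕄 n t)
    (f : Fin n → Fin m) : Tm 𝕄 m (fun w => t (fun i => w (f i))) := by
  refine ⟨fun v hv => ht.1 _ fun i => hv _, ?_⟩
  have := ht.2.ren (m := m + 1) (fun i => Fin.lastCases (motive := fun _ => Fin (m + 1))
    (Fin.last m) (fun j => (f j).castSucc) i)
  simpa using this

theorem Tm.var {n : ℕ} (i : Fin n) : Tm 𝕄 n (fun v => v i) :=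
  ⟨fun _ hv => hv i, .eq' _ _⟩

theorem GBModel.singleton_mem {x : ZFSet.{u}} (hx : x ∈ 𝕄.M) : ({x} : ZFSet.{u}) ∈ 𝕄.M := by
  simpa using 𝕄.pair_mem x hx x hx

theorem GBModel.opair_mem {x y : ZFSet.{u}} (hx : x ∈ 𝕄.M) (hy : y ∈ 𝕄.M) :
    x.pair y ∈ 𝕄.M := 𝕄.pair_mem _ (GBModel.singleton_mem hx) _ (𝕄.pair_mem _ hx _ hy)

theorem GBModel.opair_left {x y : ZFSet.{u}} (h : x.pair y ∈ 𝕄.M) : x ∈ 𝕄.M :=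
  𝕄.transitive {x} (𝕄.transitive _ h _ (by simp [ZFSet.pair])) _ (by simp)

theorem GBModel.opair_right {x y : ZFSet.{u}} (h : x.pair y ∈ 𝕄.M) : y ∈ 𝕄.M :=
  𝕄.transitive {x, y} (𝕄.transitive _ h _ (by simp [ZFSet.pair])) _ (by simp)

theorem Tm.const {n : ℕ} {c : ZFSet.{u}} (hc : c ∈ 𝕄.M) : Tm 𝕄 n (fun _ => c) :=
  ⟨fun _ _ => hc, (Dfn.cls' (Fin.last n) _
    (𝕄.sets_are_classes _ (GBModel.singleton_mem hc))).congr fun v _ => ZFSet.mem_singleton⟩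

theorem Dfn.mem {n : ℕ} {t s : (Fin n → ZFSet.{u}) → ZFSet.{u}} (ht : Tm 𝕄 n t) (hs : Tm 𝕄 n s) :
    Dfn 𝕄 n (fun v => t v ∈ s v) :=
  ht.subst (S := fun v x => x ∈ s v)
    ((hs.ren Fin.castSucc).subst (S := fun v y => v (Fin.last n) ∈ y) (.mem' _ _))

theorem Dfn.eq {n : ℕ} {t s : (Fin n → ZFSet.{u}) → ZFSet.{u}} (ht : Tm 𝕄 n t) (hs : Tm 𝕄 n s) :
    Dfn 𝕄 n (fun v => t v = s v) :=
  ht.subst (S := fun v x => x = s v)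
    ((hs.ren Fin.castSucc).subst (S := fun v y => v (Fin.last n) = y) (.eq' _ _))

theorem Dfn.cls {n : ℕ} {t : (Fin n → ZFSet.{u}) → ZFSet.{u}} (ht : Tm 𝕄 n t)
    {C : Set ZFSet.{u}} (hC : C ∈ 𝕄.Cls) : Dfn 𝕄 n (fun v => t v ∈ C) :=
  ht.subst (S := fun v x => x ∈ C) (.cls' _ _ hC)

theorem Dfn.exIn {n : ℕ} {t : (Fin n → ZFSet.{u}) → ZFSet.{u}} (ht : Tm 𝕄 n t)
    {S : (Fin n → ZFSet.{u}) → ZFSet.{u} → Prop}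
    (h : Dfn 𝕄 (n + 1) (fun w => S (fun i => w i.castSucc) (w (Fin.last n)))) :
    Dfn 𝕄 n (fun v => ∃ x ∈ t v, S v x) :=
  (Dfn.exM (S := fun v x => x ∈ t v ∧ S v x)
    ((Dfn.mem (.var _) (ht.ren Fin.castSucc)).and h)).congr fun v hv =>
    ⟨fun ⟨x, _, h⟩ => ⟨x, h⟩, fun ⟨x, h⟩ => ⟨x, 𝕄.transitive _ (ht.1 v hv) _ h.1, h⟩⟩

theorem Dfn.allIn {n : ℕ} {t : (Fin n → ZFSet.{u}) → ZFSet.{u}} (ht : Tm 𝕄 n t)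
    {S : (Fin n → ZFSet.{u}) → ZFSet.{u} → Prop}
    (h : Dfn 𝕄 (n + 1) (fun w => S (fun i => w i.castSucc) (w (Fin.last n)))) :
    Dfn 𝕄 n (fun v => ∀ x ∈ t v, S v x) :=
  (Dfn.exIn ht (S := fun v x => ¬ S v x) h.not).not.congr fun v _ => by
    push Not; rfl

theorem Tm.upair {n : ℕ} {t s : (Fin n → ZFSet.{u}) → ZFSet.{u}} (ht : Tm 𝕄 n t)
    (hs : Tm 𝕄 n s) : Tm 𝕄 n (fun v => {t v, s v}) := by
  refine ⟨fun v hv => 𝕄.pair_mem _ (ht.1 v hv) _ (hs.1 v hv), ?_⟩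
  have ht' := ht.ren Fin.castSucc
  have hs' := hs.ren Fin.castSucc
  refine (((Dfn.mem ht' (.var (Fin.last n))).and (Dfn.mem hs' (.var (Fin.last n)))).and
    (Dfn.allIn (.var (Fin.last n))
      (S := fun w x => x = t (fun i => w i.castSucc) ∨ x = s (fun i => w i.castSucc))
      ((Dfn.eq (.var (Fin.last (n + 1))) (ht'.ren Fin.castSucc)).or
        (Dfn.eq (.var (Fin.last (n + 1))) (hs'.ren Fin.castSucc))))).congr fun v _ => ?_
  rw [ZFSet.ext_iff]
  constructor
  · rintro ⟨⟨h1, h2⟩, h3⟩ z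
    constructor
    · intro hz; simpa using h3 z hz
    · intro hz
      rcases ZFSet.mem_pair.1 hz with rfl | rfl
      · exact h1
      · exact h2
  · intro h
    exact ⟨⟨(h _).2 (by simp), (h _).2 (by simp)⟩, fun x hx => by simpa using (h x).1 hx⟩

theorem Tm.pair {n : ℕ} {t s : (Fin n → ZFSet.{u}) → ZFSet.{u}} (ht : Tm 𝕄 n t)
    (hs : Tm 𝕄 n s) : Tm 𝕄 n (fun v => (t v).pair (s v)) := by
  have := (ht.upair ht).upair (ht.upair hs)
  simpa [ZFSet.pair] using this

/-- Definable binary relations give classes of pairs. -/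
theorem Dfn.to_cls2 {R : ZFSet.{u} → ZFSet.{u} → Prop}
    (h : Dfn 𝕄 2 (fun v => R (v 0) (v 1))) :
    ∃ C ∈ 𝕄.Cls, ∀ x ∈ 𝕄.M, ∀ y ∈ 𝕄.M, (x.pair y ∈ C ↔ R x y) := by
  have h1 : Dfn 𝕄 1 (fun v => ∃ x ∈ 𝕄.M, ∃ y ∈ 𝕄.M, v 0 = x.pair y ∧ R x y) := by
    apply Dfn.exM
    apply Dfn.exM
    apply Dfn.and
    · exact Dfn.eq (.var _) (.pair (.var _) (.var _))
    · exact h.ren (fun i => if i = 0 then 1 else 2)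
  refine ⟨_, h1.to_cls, fun x hx y hy => ?_⟩
  constructor
  · rintro ⟨_, x', _, y', _, e, h⟩
    obtain ⟨rfl, rfl⟩ := ZFSet.pair_inj.1 e
    exact h
  · exact fun h => ⟨GBModel.opair_mem hx hy, x, hx, y, hy, rfl, h⟩

theorem Dfn.to_cls1 {R : ZFSet.{u} → Prop} (h : Dfn 𝕄 1 (fun v => R (v 0))) :
    ∃ C ∈ 𝕄.Cls, ∀ x ∈ 𝕄.M, (x ∈ C ↔ R x) :=
  ⟨_, h.to_cls, fun _ hx => ⟨fun h => h.2, fun h => ⟨hx, h⟩⟩⟩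

/-! ### Forcing basics -/

/-- The order of `F` as a class. -/
def leC (F : ClassForcing 𝕄) : Set ZFSet.{u} :=
  {x : ZFSet | ∃ p ∈ F.P, ∃ q ∈ F.P, F.le p q ∧ x = p.pair q}

/-- The order of `F` restricted to conditions. -/
def Le (F : ClassForcing 𝕄) (p q : ZFSet.{u}) : Prop := p.pair q ∈ leC F

/-- Compatibility. -/
def Cp (F : ClassForcing 𝕄) (p q : ZFSet.{u}) : Prop := ∃ r ∈ 𝕄.M, Le F r p ∧ Le F r q

variable {F : ClassForcing 𝕄}

theorem Le_iff {p q : ZFSet.{u}} : Le F p q ↔ p ∈ F.P ∧ q ∈ F.P ∧ F.le p q := by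
  constructor
  · rintro ⟨p', hp, q', hq, h, e⟩
    obtain ⟨rfl, rfl⟩ := ZFSet.pair_inj.1 e
    exact ⟨hp, hq, h⟩
  · rintro ⟨hp, hq, h⟩
    exact ⟨p, hp, q, hq, h, rfl⟩

theorem P_sub {p : ZFSet.{u}} (hp : p ∈ F.P) : p ∈ 𝕄.M := 𝕄.classes_sub _ F.P_cls hp

theorem Le.left {p q : ZFSet.{u}} (h : Le F p q) : p ∈ F.P := (Le_iff.1 h).1
theorem Le.right {p q : ZFSet.{u}} (h : Le F p q) : q ∈ F.P := (Le_iff.1 h).2.1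
theorem Le.trans {p q r : ZFSet.{u}} (h : Le F p q) (h' : Le F q r) : Le F p r :=
  Le_iff.2 ⟨h.left, h'.right, F.le_trans _ _ _ (Le_iff.1 h).2.2 (Le_iff.1 h').2.2⟩
theorem Le.refl {p : ZFSet.{u}} (h : p ∈ F.P) : Le F p p := Le_iff.2 ⟨h, h, F.le_refl _ h⟩

theorem Cp.intro {p q r : ZFSet.{u}} (h : Le F r p) (h' : Le F r q) : Cp F p q :=
  ⟨r, P_sub h.left, h, h'⟩

theorem Cp.mono {p p' q : ZFSet.{u}} (h : Cp F p q) (h' : Le F p p') : Cp F p' q := by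
  obtain ⟨r, hr, h1, h2⟩ := h
  exact ⟨r, hr, h1.trans h', h2⟩

theorem Dfn.le {n : ℕ} {t s : (Fin n → ZFSet.{u}) → ZFSet.{u}} (ht : Tm 𝕄 n t) (hs : Tm 𝕄 n s) :
    Dfn 𝕄 n (fun v => Le F (t v) (s v)) := Dfn.cls (ht.pair hs) F.le_cls

theorem Dfn.cp {n : ℕ} {t s : (Fin n → ZFSet.{u}) → ZFSet.{u}} (ht : Tm 𝕄 n t) (hs : Tm 𝕄 n s) :
    Dfn 𝕄 n (fun v => Cp F (t v) (s v)) :=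
  Dfn.exM (S := fun v r => Le F r (t v) ∧ Le F r (s v))
    ((Dfn.le (.var _) (ht.ren _)).and (Dfn.le (.var _) (hs.ren _)))

/-! ### Generic filters -/

variable {G : Set ZFSet.{u}}

theorem gen_sub (hG : IsGeneric 𝕄 F.P F.le G) {p : ZFSet.{u}} (hp : p ∈ G) : p ∈ F.P := hG.1.1 hp

theorem gen_up (hG : IsGeneric 𝕄 F.P F.le G) {p q : ZFSet.{u}} (hp : p ∈ G) (h : Le F p q) :
    q ∈ G := hG.1.2.2.1 p hp q h.right (Le_iff.1 h).2.2

theorem gen_dir (hG : IsGeneric 𝕄 F.P F.le G) {p q : ZFSet.{u}} (hp : p ∈ G) (hq : q ∈ G) :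
    ∃ r ∈ G, Le F r p ∧ Le F r q := by
  obtain ⟨r, hr, h1, h2⟩ := hG.1.2.2.2 p hp q hq
  exact ⟨r, hr, Le_iff.2 ⟨gen_sub hG hr, gen_sub hG hp, h1⟩,
    Le_iff.2 ⟨gen_sub hG hr, gen_sub hG hq, h2⟩⟩

theorem gen_cp (hG : IsGeneric 𝕄 F.P F.le G) {p q : ZFSet.{u}} (hp : p ∈ G) (hq : q ∈ G) :
    Cp F p q := by
  obtain ⟨r, hr, h1, h2⟩ := gen_dir hG hp hq
  exact .intro h1 h2

/-- A generic filter containing `s` meets every definable class dense below `s`. -/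
theorem gen_meets (hG : IsGeneric 𝕄 F.P F.le G) {s : ZFSet.{u}} (hs : s ∈ G)
    {R : ZFSet.{u} → Prop} (hR : Dfn 𝕄 1 (fun v => R (v 0)))
    (hd : ∀ r, Le F r s → ∃ r', Le F r' r ∧ R r') : ∃ r ∈ G, R r := by
  have hsM : s ∈ 𝕄.M := P_sub (gen_sub hG hs)
  have hdef : Dfn 𝕄 1 (fun v => v 0 ∈ F.P ∧ (R (v 0) ∨ ¬ Cp F (v 0) s)) :=
    (Dfn.cls (.var _) F.P_cls).and (hR.or (Dfn.cp (.var _) (.const hsM)).not)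
  obtain ⟨r, hr, hrD⟩ := hG.2 _ hdef.to_cls ⟨fun x hx => hx.2.1, fun p hp => by
    by_cases hc : Cp F p s
    · obtain ⟨r, -, h1, h2⟩ := hc
      obtain ⟨r', h3, h4⟩ := hd r h2
      exact ⟨r', ⟨P_sub h3.left, h3.left, .inl h4⟩, (Le_iff.1 (h3.trans h1)).2.2⟩
    · exact ⟨p, ⟨P_sub hp, hp, .inr hc⟩, F.le_refl _ hp⟩⟩
  rcases hrD.2.2 with h | h
  · exact ⟨r, hr, h⟩
  · exact absurd (gen_cp hG hr hs) h

/-- The key consequence of pretameness. -/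
theorem approx (hpre : Pretame 𝕄 F) (hG : IsGeneric 𝕄 F.P F.le G) {I : ZFSet.{u}} (hI : I ∈ 𝕄.M)
    {E : ZFSet.{u} → ZFSet.{u} → Prop} (hE : Dfn 𝕄 2 (fun v => E (v 0) (v 1)))
    (hopen : ∀ i ∈ I, ∀ t t', E i t → Le F t' t → E i t')
    (hmeet : ∀ i ∈ I, ∃ g ∈ G, E i g) :
    ∃ q ∈ G, ∃ U ∈ 𝕄.M, ∀ i ∈ I, ∀ r, Le F r q → ∃ r', Le F r' r ∧ ∃ t ∈ U, E i t ∧ Le F r' t := by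
  have hMI : ∀ i ∈ I, i ∈ 𝕄.M := fun i hi => 𝕄.transitive _ hI _ hi
  have hEE : ∀ {n : ℕ} {t s : (Fin n → ZFSet.{u}) → ZFSet.{u}}, Tm 𝕄 n t → Tm 𝕄 n s →
      Dfn 𝕄 n (fun v => E (t v) (s v)) := by
    obtain ⟨C, hC, hC'⟩ := hE.to_cls2
    intro n t s ht hs
    exact (Dfn.cls (ht.pair hs) hC).congr fun v hv => hC' _ (ht.1 v hv) _ (hs.1 v hv)
  -- bad conditions
  let Bad : ZFSet.{u} → ZFSet.{u} → Prop := fun i x => ∀ x' ∈ 𝕄.M, Le F x' x → ¬ E i x'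
  have hBad : ∀ {n : ℕ} {t s : (Fin n → ZFSet.{u}) → ZFSet.{u}}, Tm 𝕄 n t → Tm 𝕄 n s →
      Dfn 𝕄 n (fun v => Bad (t v) (s v)) := by
    intro n t s ht hs
    exact Dfn.allM (S := fun v x' => Le F x' (s v) → ¬ E (t v) x')
      ((Dfn.le (.var _) (hs.ren _)).imp (hEE (ht.ren _) (.var _)).not)
  have hDdef : Dfn 𝕄 2 (fun v => v 1 ∈ F.P ∧ (E (v 0) (v 1) ∨ Bad (v 0) (v 1))) :=
    (Dfn.cls (.var _) F.P_cls).and ((hEE (.var _) (.var _)).or (hBad (.var _) (.var _)))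
  obtain ⟨D, hD, hD'⟩ := hDdef.to_cls2 (R := fun i x => x ∈ F.P ∧ (E i x ∨ Bad i x))
  have hQ : ∀ p ∈ F.P, ∃ q, Le F q p ∧ ∃ U ∈ 𝕄.M, ∀ i ∈ I, ∀ r ∈ 𝕄.M, Le F r q →
      ∃ t ∈ U, (E i t ∨ Bad i t) ∧ Cp F r t := by
    intro p hp
    obtain ⟨q, hq, hqp, d, hd, hfun, hdd⟩ := hpre p hp I hI D hD (by
      intro i hi
      refine ⟨fun x hx => ?_, fun r hr => ?_⟩
      · exact ((hD' i (hMI i hi) x (GBModel.opair_right (𝕄.classes_sub _ hD hx))).1 hx).1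
      · by_cases hb : Bad i r
        · exact ⟨r, (hD' i (hMI i hi) r (P_sub hr)).2 ⟨hr, .inr hb⟩, F.le_refl _ hr⟩
        · simp only [Bad] at hb
          push Not at hb
          obtain ⟨x', hx', hle, hEx⟩ := hb
          exact ⟨x', (hD' i (hMI i hi) x' hx').2 ⟨hle.left, .inl hEx⟩, (Le_iff.1 hle).2.2⟩)
    refine ⟨q, Le_iff.2 ⟨hq, hp, hqp⟩, ⋃₀ (⋃₀ (⋃₀ d)),
      𝕄.sUnion_mem _ (𝕄.sUnion_mem _ (𝕄.sUnion_mem _ hd)), fun i hi r hr hrq => ?_⟩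
    obtain ⟨a, ha, r', hr'P, h1, h2⟩ := (hdd i hi).2 r hrq.left (Le_iff.1 hrq).2.2
    have haD := (hdd i hi).1 a ha
    have haM := GBModel.opair_right (𝕄.classes_sub _ hD haD)
    have hax := (hD' i (hMI i hi) a haM).1 haD
    refine ⟨a, ?_, hax.2, .intro (Le_iff.2 ⟨hr'P, hrq.left, h1⟩) (Le_iff.2 ⟨hr'P, hax.1, h2⟩)⟩
    have hex := hfun.2.2 i hi
    have hz : i.pair (zapp d i) ∈ d := by
      unfold zapp
      rw [dif_pos hex]
      exact hex.choose_spec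
    refine ZFSet.mem_sUnion.2 ⟨zapp d i, ?_, ha⟩
    refine ZFSet.mem_sUnion.2 ⟨{i, zapp d i}, ?_, by simp⟩
    exact ZFSet.mem_sUnion.2 ⟨_, hz, by simp [ZFSet.pair]⟩
  obtain ⟨g0, hg0⟩ := hG.1.2.1
  obtain ⟨q0, hq0, U, hU, hUq⟩ := gen_meets hG hg0
    (R := fun q => ∃ U ∈ 𝕄.M, ∀ i ∈ I, ∀ r ∈ 𝕄.M, Le F r q →
      ∃ t ∈ U, (E i t ∨ Bad i t) ∧ Cp F r t) (by
      apply Dfn.exM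
      apply Dfn.allIn (.const hI)
      apply Dfn.allM
      apply Dfn.imp (Dfn.le (.var _) (.var _))
      apply Dfn.exIn (.var _)
      exact ((hEE (.var _) (.var _)).or (hBad (.var _) (.var _))).and (Dfn.cp (.var _) (.var _)))
    (fun r hr => hQ r hr.left)
  obtain ⟨q1, hq1, hor⟩ := gen_meets hG hg0
    (R := fun q => (∃ i ∈ I, ∃ t ∈ U, Bad i t ∧ Le F q t) ∨
      ∀ i ∈ I, ∀ t ∈ U, Bad i t → ¬ Cp F q t) (by
      apply Dfn.or
      · apply Dfn.exIn (.const hI)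
        apply Dfn.exIn (.const hU)
        exact (hBad (.var _) (.var _)).and (Dfn.le (.var _) (.var _))
      · apply Dfn.allIn (.const hI)
        apply Dfn.allIn (.const hU)
        exact (hBad (.var _) (.var _)).imp (Dfn.cp (.var _) (.var _)).not)
    (fun r hr => by
      by_cases hb : ∃ i ∈ I, ∃ t ∈ U, Bad i t ∧ Cp F r t
      · obtain ⟨i, hi, t, ht, hb, r', _, h1, h2⟩ := hb
        exact ⟨r', h1, .inl ⟨i, hi, t, ht, hb, h2⟩⟩
      · push Not at hb
        exact ⟨r, .refl hr.left, .inr hb⟩)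
  have hgood : ∀ i ∈ I, ∀ t ∈ U, Bad i t → ¬ Cp F q1 t := by
    rcases hor with ⟨i, hi, t, ht, hb, hle⟩ | h
    · exfalso
      obtain ⟨g, hg, hEg⟩ := hmeet i hi
      obtain ⟨r, hr, h1, h2⟩ := gen_dir hG hg (gen_up hG hq1 hle)
      exact hb r (P_sub h1.left) h2 (hopen i hi _ _ hEg h1)
    · exact h
  obtain ⟨q, hq, hqq0, hqq1⟩ := gen_dir hG hq0 hq1
  refine ⟨q, hq, U, hU, fun i hi r hr => ?_⟩
  obtain ⟨t, ht, hEB, r', _, h1, h2⟩ := hUq i hi r (P_sub hr.left) (hr.trans hqq0)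
  refine ⟨r', h1, t, ht, ?_, h2⟩
  rcases hEB with h | h
  · exact h
  · exact absurd (Cp.intro ((h1.trans hr).trans hqq1) h2) (hgood i hi t ht h)

/-! ### Evaluation of names -/

theorem rank_lt_of_pair_mem {τ p σ : ZFSet.{u}} (h : τ.pair p ∈ σ) : τ.rank < σ.rank := by
  have h1 : τ.rank < ({τ} : ZFSet.{u}).rank := ZFSet.rank_lt_of_mem (by simp)
  have h2 : ({τ} : ZFSet.{u}).rank < (τ.pair p).rank :=
    ZFSet.rank_lt_of_mem (by simp [ZFSet.pair])
  exact h1.trans (h2.trans (ZFSet.rank_lt_of_mem h))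

theorem mem_nameEval {σ x : ZFSet.{u}} :
    x ∈ nameEval G σ ↔ ∃ τ p : ZFSet.{u}, p ∈ G ∧ τ.pair p ∈ σ ∧ nameEval G τ = x := by
  unfold nameEval
  rw [nameEvalAux]
  unfold zimage
  rw [@ZFSet.mem_image _ (Classical.allZFSetDefinable _)]
  constructor
  · rintro ⟨τ, hτ, rfl⟩
    obtain ⟨_, p, hp, hm⟩ := ZFSet.mem_sep.1 hτ
    exact ⟨τ, p, hp, hm, by rw [dif_pos (rank_lt_of_pair_mem hm)]⟩
  · rintro ⟨τ, p, hp, hm, rfl⟩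
    refine ⟨τ, ZFSet.mem_sep.2 ⟨?_, p, hp, hm⟩, by rw [dif_pos (rank_lt_of_pair_mem hm)]⟩
    refine ZFSet.mem_sUnion.2 ⟨{τ}, ?_, by simp⟩
    exact ZFSet.mem_sUnion.2 ⟨_, hm, by simp [ZFSet.pair]⟩

/-! ### A first-order forcing relation for `σ = x` with `x` in the ground model -/

/-- `W` is a local witness for `s ⊩ ρ = y`. -/
def Loc (F : ClassForcing 𝕄) (W ρ y s : ZFSet.{u}) : Prop :=
  (∀ z ∈ y, ∀ r ∈ 𝕄.M, Le F r s → ∃ r' ∈ 𝕄.M, Le F r' r ∧ ∃ π ∈ 𝕄.M, ∃ a ∈ 𝕄.M, ∃ t ∈ 𝕄.M,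
    π.pair a ∈ ρ ∧ π.pair (z.pair t) ∈ W ∧ Le F r' a ∧ Le F r' t) ∧
  ∀ π ∈ 𝕄.M, ∀ a ∈ 𝕄.M, π.pair a ∈ ρ → ∀ r ∈ 𝕄.M, Le F r s → ∃ r' ∈ 𝕄.M, Le F r' r ∧
    (¬ Cp F r' a ∨ ∃ z ∈ y, ∃ t ∈ 𝕄.M, π.pair (z.pair t) ∈ W ∧ Le F r' t)

def Good (F : ClassForcing 𝕄) (W : ZFSet.{u}) : Prop :=
  ∀ ρ ∈ 𝕄.M, ∀ y ∈ 𝕄.M, ∀ s ∈ 𝕄.M, ρ.pair (y.pair s) ∈ W → Loc F W ρ y s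

/-- `s ⊩ ρ = y`. -/
def Fo (F : ClassForcing 𝕄) (s ρ y : ZFSet.{u}) : Prop :=
  s ∈ F.P ∧ ∃ W ∈ 𝕄.M, Good F W ∧ Loc F W ρ y s

theorem Dfn.loc {n : ℕ} {t1 t2 t3 t4 : (Fin n → ZFSet.{u}) → ZFSet.{u}} (h1 : Tm 𝕄 n t1)
    (h2 : Tm 𝕄 n t2) (h3 : Tm 𝕄 n t3) (h4 : Tm 𝕄 n t4) :
    Dfn 𝕄 n (fun v => Loc F (t1 v) (t2 v) (t3 v) (t4 v)) := by
  unfold Loc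
  repeat' first
    | with_reducible exact Tm.var _
    | with_reducible assumption
    | with_reducible apply Dfn.and
    | with_reducible apply Dfn.exM
    | with_reducible apply Dfn.allM
    | with_reducible apply Dfn.allIn
    | with_reducible apply Dfn.exIn
    | with_reducible apply Dfn.not
    | with_reducible apply Dfn.imp
    | with_reducible apply Dfn.or
    | with_reducible apply Dfn.le
    | with_reducible apply Dfn.cp
    | with_reducible apply Dfn.mem
    | with_reducible apply Tm.pair
    | with_reducible exact Tm.ren h1 _
    | with_reducible exact Tm.ren h2 _
    | with_reducible exact Tm.ren h3 _
    | with_reducible exact Tm.ren h4 _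

theorem Dfn.good {n : ℕ} {t : (Fin n → ZFSet.{u}) → ZFSet.{u}} (h1 : Tm 𝕄 n t) :
    Dfn 𝕄 n (fun v => Good F (t v)) := by
  unfold Good
  apply Dfn.allM
  apply Dfn.allM
  apply Dfn.allM
  apply Dfn.imp
  · exact Dfn.mem (.pair (.var _) (.pair (.var _) (.var _))) (h1.ren _)
  · exact Dfn.loc (h1.ren _) (.var _) (.var _) (.var _)

theorem Dfn.fo {n : ℕ} {t1 t2 t3 : (Fin n → ZFSet.{u}) → ZFSet.{u}} (h1 : Tm 𝕄 n t1)
    (h2 : Tm 𝕄 n t2) (h3 : Tm 𝕄 n t3) :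
    Dfn 𝕄 n (fun v => Fo F (t1 v) (t2 v) (t3 v)) := by
  unfold Fo
  apply Dfn.and (Dfn.cls h1 F.P_cls)
  apply Dfn.exM
  exact (Dfn.good (.var _)).and (Dfn.loc (.var _) (h2.ren _) (h3.ren _) (h1.ren _))

theorem Loc.mono {W W' ρ y s s' : ZFSet.{u}} (h : Loc F W ρ y s) (hW : W ⊆ W') (hs : Le F s' s) :
    Loc F W' ρ y s' := by
  refine ⟨fun z hz r hr hrs => ?_, fun π hπ a ha hm r hr hrs => ?_⟩
  · obtain ⟨r', hr', h1, π, hπ, a, ha, t, ht, h2, h3, h4⟩ := h.1 z hz r hr (hrs.trans hs)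
    exact ⟨r', hr', h1, π, hπ, a, ha, t, ht, h2, hW h3, h4⟩
  · obtain ⟨r', hr', h1, h2⟩ := h.2 π hπ a ha hm r hr (hrs.trans hs)
    refine ⟨r', hr', h1, h2.imp id ?_⟩
    rintro ⟨z, hz, t, ht, h3, h4⟩
    exact ⟨z, hz, t, ht, hW h3, h4⟩

theorem Fo.mono {ρ y s s' : ZFSet.{u}} (h : Fo F s ρ y) (hs : Le F s' s) : Fo F s' ρ y := by
  obtain ⟨_, W, hW, hg, hl⟩ := h
  exact ⟨hs.left, W, hW, hg, hl.mono (fun _ h => h) hs⟩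

theorem Loc.sound (hG : IsGeneric 𝕄 F.P F.le G) {W : ZFSet.{u}} (hW : W ∈ 𝕄.M) (hg : Good F W) :
    ∀ (o : Ordinal.{u}) (ρ y s : ZFSet.{u}), ρ.rank = o → ρ ∈ 𝕄.M → y ∈ 𝕄.M → s ∈ G →
      Loc F W ρ y s → nameEval G ρ = y := by
  intro o
  induction o using WellFoundedLT.induction with
  | ind o ih =>
  rintro ρ y s rfl hρ hy hs hl
  have key : ∀ π a z t, π.pair a ∈ ρ → π.pair (z.pair t) ∈ W → t ∈ G → nameEval G π = z := by
    intro π a z t hm hw ht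
    have h1 := 𝕄.transitive _ hW _ hw
    have hπ := GBModel.opair_left h1
    have hz := GBModel.opair_left (GBModel.opair_right h1)
    have htM := GBModel.opair_right (GBModel.opair_right h1)
    exact ih _ (rank_lt_of_pair_mem hm) π z t rfl hπ hz ht (hg π hπ z hz t htM hw)
  ext z
  rw [mem_nameEval]
  constructor
  · rintro ⟨π, a, ha, hm, rfl⟩
    have h1 := 𝕄.transitive _ hρ _ hm
    have hπ := GBModel.opair_left h1
    have haM := GBModel.opair_right h1
    obtain ⟨r, hr, h2⟩ := gen_meets hG hs
      (R := fun r' => ¬ Cp F r' a ∨ ∃ z ∈ y, ∃ t ∈ 𝕄.M, π.pair (z.pair t) ∈ W ∧ Le F r' t) (by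
        apply Dfn.or (Dfn.cp (.var _) (.const haM)).not
        apply Dfn.exIn (.const hy)
        apply Dfn.exM
        exact (Dfn.mem (.pair (.const hπ) (.pair (.var _) (.var _))) (.const hW)).and
          (Dfn.le (.var _) (.var _)))
      (fun r hr => by
        obtain ⟨r', _, h3, h4⟩ := hl.2 π hπ a haM hm r (P_sub hr.left) hr
        exact ⟨r', h3, h4⟩)
    rcases h2 with h2 | ⟨z, hz, t, _, hw, hle⟩
    · exact absurd (gen_cp hG hr ha) h2
    · rw [key π a z t hm hw (gen_up hG hr hle)]; exact hz
  · intro hz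
    have hzM := 𝕄.transitive _ hy _ hz
    obtain ⟨r, hr, π, _, a, _, t, _, hm, hw, ha, ht⟩ := gen_meets hG hs
      (R := fun r' => ∃ π ∈ 𝕄.M, ∃ a ∈ 𝕄.M, ∃ t ∈ 𝕄.M,
        π.pair a ∈ ρ ∧ π.pair (z.pair t) ∈ W ∧ Le F r' a ∧ Le F r' t) (by
        apply Dfn.exM
        apply Dfn.exM
        apply Dfn.exM
        exact (Dfn.mem (.pair (.var _) (.var _)) (.const hρ)).and
          ((Dfn.mem (.pair (.var _) (.pair (.const hzM) (.var _))) (.const hW)).and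
          ((Dfn.le (.var _) (.var _)).and (Dfn.le (.var _) (.var _)))))
      (fun r hr => by
        obtain ⟨r', _, h3, h4⟩ := hl.1 z hz r (P_sub hr.left) hr
        exact ⟨r', h3, h4⟩)
    exact ⟨π, a, gen_up hG hr ha, hm, key π a z t hm hw (gen_up hG hr ht)⟩

theorem Fo.sound (hG : IsGeneric 𝕄 F.P F.le G) {s ρ y : ZFSet.{u}} (hρ : ρ ∈ 𝕄.M) (hy : y ∈ 𝕄.M)
    (hs : s ∈ G) (h : Fo F s ρ y) : nameEval G ρ = y := by
  obtain ⟨_, W, hW, hg, hl⟩ := h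
  exact Loc.sound hG hW hg _ ρ y s rfl hρ hy hs hl

/-! ### Set-theoretic closure of `𝕄` -/

theorem GBModel.union_mem {x y : ZFSet.{u}} (hx : x ∈ 𝕄.M) (hy : y ∈ 𝕄.M) : x ∪ y ∈ 𝕄.M := by
  have := 𝕄.sUnion_mem _ (𝕄.pair_mem x hx y hy)
  convert this using 1
  ext z; simp

theorem GBModel.coll {R : ZFSet.{u} → ZFSet.{u} → Prop} (hR : Dfn 𝕄 2 (fun v => R (v 0) (v 1)))
    {a : ZFSet.{u}} (ha : a ∈ 𝕄.M) (h : ∀ x ∈ a, ∃ y ∈ 𝕄.M, R x y) :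
    ∃ b ∈ 𝕄.M, ∀ x ∈ a, ∃ y ∈ b, R x y := by
  obtain ⟨C, hC, hC'⟩ := hR.to_cls2
  have haM : ∀ x ∈ a, x ∈ 𝕄.M := fun x hx => 𝕄.transitive _ ha _ hx
  obtain ⟨b, hb, hb'⟩ := 𝕄.collection C hC a ha (fun x hx => by
    obtain ⟨y, hy, hxy⟩ := h x hx
    exact ⟨y, hy, (hC' x (haM x hx) y hy).2 hxy⟩)
  refine ⟨b, hb, fun x hx => ?_⟩
  obtain ⟨y, hy, hxy⟩ := hb' x hx
  exact ⟨y, hy, (hC' x (haM x hx) y (𝕄.transitive _ hb _ hy)).1 hxy⟩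

theorem GBModel.sepa {R : ZFSet.{u} → Prop} (hR : Dfn 𝕄 1 (fun v => R (v 0)))
    {a : ZFSet.{u}} (ha : a ∈ 𝕄.M) :
    ∃ b ∈ 𝕄.M, ∀ x, x ∈ b ↔ x ∈ a ∧ R x := by
  obtain ⟨C, hC, hC'⟩ := hR.to_cls1
  obtain ⟨b, hb, hb'⟩ := 𝕄.separation C hC a ha
  exact ⟨b, hb, fun x => (hb' x).trans (and_congr_right fun hx =>
    hC' x (𝕄.transitive _ ha _ hx))⟩

theorem GBModel.prod_mem {a b : ZFSet.{u}} (ha : a ∈ 𝕄.M) (hb : b ∈ 𝕄.M) :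
    ∃ c ∈ 𝕄.M, ∀ x ∈ a, ∀ y ∈ b, x.pair y ∈ c := by
  have h1 : ∀ x ∈ a, ∃ c ∈ 𝕄.M, ∀ y ∈ b, x.pair y ∈ c := by
    intro x hx
    have hxM := 𝕄.transitive _ ha _ hx
    obtain ⟨c, hc, h⟩ := GBModel.coll (𝕄 := 𝕄) (R := fun y w => w = x.pair y)
      (Dfn.eq (.var _) (.pair (.const hxM) (.var _))) hb
      (fun y hy => ⟨_, GBModel.opair_mem hxM (𝕄.transitive _ hb _ hy), rfl⟩)
    refine ⟨c, hc, fun y hy => ?_⟩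
    obtain ⟨w, hw, rfl⟩ := h y hy
    exact hw
  obtain ⟨e, he, h⟩ := GBModel.coll (𝕄 := 𝕄) (R := fun x c => ∀ y ∈ b, x.pair y ∈ c) (by
    apply Dfn.allIn (.const hb)
    exact Dfn.mem (.pair (.var _) (.var _)) (.var _)) ha h1
  refine ⟨_, 𝕄.sUnion_mem _ he, fun x hx y hy => ?_⟩
  obtain ⟨c, hc, h2⟩ := h x hx
  exact ZFSet.mem_sUnion.2 ⟨c, hc, h2 y hy⟩

/-- A single good set of witnesses for set many forcing statements. -/
theorem collect {ρ y U : ZFSet.{u}} (hρ : ρ ∈ 𝕄.M) (hy : y ∈ 𝕄.M) (hU : U ∈ 𝕄.M) :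
    ∃ W ∈ 𝕄.M, Good F W ∧ ∀ π a z t, π.pair a ∈ ρ → z ∈ y → t ∈ U → Fo F t π z →
      π.pair (z.pair t) ∈ W := by
  obtain ⟨c1, hc1, h1⟩ := GBModel.prod_mem hy hU
  obtain ⟨c, hc, h2⟩ := GBModel.prod_mem (𝕄.sUnion_mem _ (𝕄.sUnion_mem _ hρ)) hc1
  obtain ⟨A, hA, hA'⟩ := GBModel.sepa (𝕄 := 𝕄)
    (R := fun x => ∃ π ∈ 𝕄.M, ∃ z ∈ 𝕄.M, ∃ t ∈ 𝕄.M, x = π.pair (z.pair t) ∧ Fo F t π z) (by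
      apply Dfn.exM
      apply Dfn.exM
      apply Dfn.exM
      exact (Dfn.eq (.var _) (.pair (.var _) (.pair (.var _) (.var _)))).and
        (Dfn.fo (.var _) (.var _) (.var _))) hc
  obtain ⟨b, hb, hb'⟩ := GBModel.coll (𝕄 := 𝕄)
    (R := fun x W => ∃ π ∈ 𝕄.M, ∃ z ∈ 𝕄.M, ∃ t ∈ 𝕄.M, x = π.pair (z.pair t) ∧ t ∈ F.P ∧
      Good F W ∧ Loc F W π z t) (by
      apply Dfn.exM
      apply Dfn.exM
      apply Dfn.exM
      exact (Dfn.eq (.var _) (.pair (.var _) (.pair (.var _) (.var _)))).and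
        ((Dfn.cls (.var _) F.P_cls).and ((Dfn.good (.var _)).and
          (Dfn.loc (.var _) (.var _) (.var _) (.var _))))) hA
    (fun x hx => by
      obtain ⟨_, π, hπ, z, hz, t, ht, rfl, htP, W, hW, hg, hl⟩ := (hA' x).1 hx
      exact ⟨W, hW, π, hπ, z, hz, t, ht, rfl, htP, hg, hl⟩)
  obtain ⟨b1, hb1, hb1'⟩ := GBModel.sepa (𝕄 := 𝕄) (R := fun W => Good F W)
    (Dfn.good (.var _)) hb
  refine ⟨⋃₀ b1 ∪ A, GBModel.union_mem (𝕄.sUnion_mem _ hb1) hA, ?_, ?_⟩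
  · intro π hπ z hz t ht hm
    have hsub : ∀ W ∈ b1, W ⊆ ⋃₀ b1 ∪ A := fun W hW x hx =>
      ZFSet.mem_union.2 (.inl (ZFSet.mem_sUnion.2 ⟨W, hW, hx⟩))
    have hfin : ∀ W ∈ b1, Loc F W π z t → Loc F (⋃₀ b1 ∪ A) π z t := by
      intro W hW hl
      by_cases htP : t ∈ F.P
      · exact hl.mono (hsub W hW) (.refl htP)
      · exact ⟨fun _ _ r _ hr => absurd hr.right htP, fun _ _ _ _ _ r _ hr => absurd hr.right htP⟩
    rcases ZFSet.mem_union.1 hm with hm | hm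
    · obtain ⟨W, hW, hmW⟩ := ZFSet.mem_sUnion.1 hm
      exact hfin W hW (((hb1' W).1 hW).2 π hπ z hz t ht hmW)
    · obtain ⟨W, hW, π', _, z', _, t', _, e, _, hg, hl⟩ := hb' _ hm
      obtain ⟨rfl, e'⟩ := ZFSet.pair_inj.1 e
      obtain ⟨rfl, rfl⟩ := ZFSet.pair_inj.1 e'
      exact hfin W ((hb1' W).2 ⟨hW, hg⟩) hl
  · intro π a z t hm hz ht hf
    refine ZFSet.mem_union.2 (.inr ((hA' _).2 ⟨h2 _ ?_ _ (h1 z hz t ht), ?_⟩))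
    · refine ZFSet.mem_sUnion.2 ⟨{π}, ?_, by simp⟩
      exact ZFSet.mem_sUnion.2 ⟨_, hm, by simp [ZFSet.pair]⟩
    · exact ⟨π, GBModel.opair_left (𝕄.transitive _ hρ _ hm), z, 𝕄.transitive _ hy _ hz, t,
        𝕄.transitive _ hU _ ht, rfl, hf⟩

theorem gen_decide (hG : IsGeneric 𝕄 F.P F.le G) {a : ZFSet.{u}} (haM : a ∈ 𝕄.M) (ha : a ∉ G) :
    ∃ g ∈ G, ¬ Cp F g a := by
  obtain ⟨g0, hg0⟩ := hG.1.2.1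
  obtain ⟨g, hg, h⟩ := gen_meets hG hg0 (R := fun r => Le F r a ∨ ¬ Cp F r a)
    ((Dfn.le (.var _) (.const haM)).or (Dfn.cp (.var _) (.const haM)).not)
    (fun r hr => by
      by_cases hc : Cp F r a
      · obtain ⟨r', _, h1, h2⟩ := hc
        exact ⟨r', h1, .inl h2⟩
      · exact ⟨r, .refl hr.left, .inr hc⟩)
  rcases h with h | h
  · exact absurd (gen_up hG hg h) ha
  · exact ⟨g, hg, h⟩

/-- The truth lemma. -/
theorem truth (hpre : Pretame 𝕄 F) (hG : IsGeneric 𝕄 F.P F.le G) :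
    ∀ (o : Ordinal.{u}) (ρ : ZFSet.{u}), ρ.rank = o → ρ ∈ 𝕄.M → nameEval G ρ ∈ 𝕄.M →
      ∃ s ∈ G, Fo F s ρ (nameEval G ρ) := by
  intro o
  induction o using WellFoundedLT.induction with
  | ind o ih =>
  rintro ρ rfl hρ hy
  have ih' : ∀ π a, π.pair a ∈ ρ → a ∈ G → ∃ s ∈ G, Fo F s π (nameEval G π) := by
    intro π a hm ha
    exact ih _ (rank_lt_of_pair_mem hm) π rfl (GBModel.opair_left (𝕄.transitive _ hρ _ hm))
      (𝕄.transitive _ hy _ (mem_nameEval.2 ⟨π, a, ha, hm, rfl⟩))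
  have hyy : ∀ z, z ∈ nameEval G ρ ↔ ∃ π a, a ∈ G ∧ π.pair a ∈ ρ ∧ nameEval G π = z :=
    fun z => mem_nameEval
  generalize nameEval G ρ = y at hy hyy
  obtain ⟨q1, hq1, U1, hU1, h1⟩ := approx hpre hG hy
    (E := fun z t => ∃ π ∈ 𝕄.M, ∃ a ∈ 𝕄.M, π.pair a ∈ ρ ∧ Le F t a ∧ Fo F t π z) (by
      apply Dfn.exM
      apply Dfn.exM
      exact (Dfn.mem (.pair (.var _) (.var _)) (.const hρ)).and
        ((Dfn.le (.var _) (.var _)).and (Dfn.fo (.var _) (.var _) (.var _))))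
    (fun z hz t t' => by
      rintro ⟨π, hπ, a, ha, hm, hle, hf⟩ htt
      exact ⟨π, hπ, a, ha, hm, htt.trans hle, hf.mono htt⟩)
    (fun z hz => by
      obtain ⟨π, a, ha, hm, rfl⟩ := (hyy z).1 hz
      obtain ⟨s, hs, hf⟩ := ih' π a hm ha
      obtain ⟨g, hg, h3, h4⟩ := gen_dir hG hs ha
      have hmM := 𝕄.transitive _ hρ _ hm
      exact ⟨g, hg, π, GBModel.opair_left hmM, a, GBModel.opair_right hmM, hm, h4, hf.mono h3⟩)
  obtain ⟨q2, hq2, U2, hU2, h2⟩ := approx hpre hG hρ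
    (E := fun i t => ∀ π ∈ 𝕄.M, ∀ a ∈ 𝕄.M, i = π.pair a → (¬ Cp F t a ∨ ∃ z ∈ y, Fo F t π z)) (by
      apply Dfn.allM
      apply Dfn.allM
      apply (Dfn.eq (.var _) (.pair (.var _) (.var _))).imp
      apply (Dfn.cp (.var _) (.var _)).not.or
      apply Dfn.exIn (.const hy)
      exact Dfn.fo (.var _) (.var _) (.var _))
    (fun i hi t t' => by
      intro h htt π hπ a ha e
      refine (h π hπ a ha e).imp (fun h hc => h (hc.mono htt)) ?_
      rintro ⟨z, hz, hf⟩
      exact ⟨z, hz, hf.mono htt⟩)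
    (fun i hi => by
      have hiM := 𝕄.transitive _ hρ _ hi
      by_cases hp : ∃ π a : ZFSet.{u}, i = π.pair a
      · obtain ⟨π, a, rfl⟩ := hp
        by_cases ha : a ∈ G
        · obtain ⟨s, hs, hf⟩ := ih' π a hi ha
          refine ⟨s, hs, fun π' _ a' _ e => .inr ?_⟩
          obtain ⟨rfl, rfl⟩ := ZFSet.pair_inj.1 e
          exact ⟨_, (hyy _).2 ⟨π, a, ha, hi, rfl⟩, hf⟩
        · obtain ⟨g, hg, h⟩ := gen_decide hG (GBModel.opair_right hiM) ha
          refine ⟨g, hg, fun π' _ a' _ e => .inl ?_⟩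
          obtain ⟨rfl, rfl⟩ := ZFSet.pair_inj.1 e
          exact h
      · exact ⟨q1, hq1, fun π _ a _ e => absurd ⟨π, a, e⟩ hp⟩)
  obtain ⟨s, hs, hs1, hs2⟩ := gen_dir hG hq1 hq2
  obtain ⟨W, hW, hg, hWc⟩ := collect (F := F) hρ hy (GBModel.union_mem hU1 hU2)
  refine ⟨s, hs, gen_sub hG hs, W, hW, hg, ?_, ?_⟩
  · intro z hz r hr hrs
    obtain ⟨r', hr', t, ht, ⟨π, hπ, a, ha, hm, hle, hf⟩, hrt⟩ := h1 z hz r (hrs.trans hs1)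
    have htU := ZFSet.mem_union.2 (Or.inl (b := t ∈ U2) ht)
    exact ⟨r', P_sub hr'.left, hr', π, hπ, a, ha, t, P_sub hrt.right, hm,
      hWc π a z t hm hz htU hf, hrt.trans hle, hrt⟩
  · intro π hπ a ha hm r hr hrs
    obtain ⟨r', hr', t, ht, h, hrt⟩ := h2 _ hm r (hrs.trans hs2)
    replace h := h π hπ a ha rfl
    have htU := ZFSet.mem_union.2 (Or.inr (a := t ∈ U1) ht)
    refine ⟨r', P_sub hr'.left, hr', h.imp (fun h hc => h (hc.mono hrt)) ?_⟩
    rintro ⟨z, hz, hf⟩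
    exact ⟨z, hz, t, P_sub hrt.right, hWc π a z t hm hz htU hf, hrt⟩

theorem no_class_to_set (hpre : Pretame 𝕄 F) {X : Set ZFSet.{u}} (hX : IsProperClass 𝕄 X)
    {σ : ZFSet.{u}} (hσ : σ ∈ 𝕄.M) (hG : IsGeneric 𝕄 F.P F.le G)
    (e : (nameEval G σ).toSet = X) : False := by
  have hXM : ∀ x ∈ nameEval G σ, x ∈ 𝕄.M := fun x hx =>
    𝕄.classes_sub X hX.1 (by rw [← e]; exact hx)
  have htr : ∀ π a, π.pair a ∈ σ → a ∈ G → ∃ s ∈ G, Fo F s π (nameEval G π) := by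
    intro π a hm ha
    exact truth hpre hG _ π rfl (GBModel.opair_left (𝕄.transitive _ hσ _ hm))
      (hXM _ (mem_nameEval.2 ⟨π, a, ha, hm, rfl⟩))
  obtain ⟨g0, hg0⟩ := hG.1.2.1
  obtain ⟨q, hq, U, hU, h2⟩ := approx hpre hG hσ
    (E := fun i t => ∀ π ∈ 𝕄.M, ∀ a ∈ 𝕄.M, i = π.pair a →
      (¬ Cp F t a ∨ ∃ z ∈ 𝕄.M, Fo F t π z)) (by
      apply Dfn.allM
      apply Dfn.allM
      apply (Dfn.eq (.var _) (.pair (.var _) (.var _))).imp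
      apply (Dfn.cp (.var _) (.var _)).not.or
      apply Dfn.exM
      exact Dfn.fo (.var _) (.var _) (.var _))
    (fun i hi t t' => by
      intro h htt π hπ a ha e
      refine (h π hπ a ha e).imp (fun h hc => h (hc.mono htt)) ?_
      rintro ⟨z, hz, hf⟩
      exact ⟨z, hz, hf.mono htt⟩)
    (fun i hi => by
      have hiM := 𝕄.transitive _ hσ _ hi
      by_cases hp : ∃ π a : ZFSet.{u}, i = π.pair a
      · obtain ⟨π, a, rfl⟩ := hp
        by_cases ha : a ∈ G
        · obtain ⟨s, hs, hf⟩ := htr π a hi ha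
          refine ⟨s, hs, fun π' _ a' _ e => .inr ?_⟩
          obtain ⟨rfl, rfl⟩ := ZFSet.pair_inj.1 e
          exact ⟨_, hXM _ (mem_nameEval.2 ⟨π, a, ha, hi, rfl⟩), hf⟩
        · obtain ⟨g, hg, h⟩ := gen_decide hG (GBModel.opair_right hiM) ha
          refine ⟨g, hg, fun π' _ a' _ e => .inl ?_⟩
          obtain ⟨rfl, rfl⟩ := ZFSet.pair_inj.1 e
          exact h
      · exact ⟨g0, hg0, fun π _ a _ e => absurd ⟨π, a, e⟩ hp⟩)
  -- bound the possible values
  obtain ⟨c, hc, hc'⟩ := GBModel.prod_mem (𝕄.sUnion_mem _ (𝕄.sUnion_mem _ hσ)) hU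
  have hRdef : Dfn 𝕄 2 (fun v => ∃ π ∈ 𝕄.M, ∃ t ∈ 𝕄.M, v 0 = π.pair t ∧ Fo F t π (v 1)) := by
    apply Dfn.exM
    apply Dfn.exM
    exact (Dfn.eq (.var _) (.pair (.var _) (.var _))).and (Dfn.fo (.var _) (.var _) (.var _))
  obtain ⟨A, hA, hA'⟩ := GBModel.sepa (𝕄 := 𝕄)
    (R := fun x => ∃ z ∈ 𝕄.M, ∃ π ∈ 𝕄.M, ∃ t ∈ 𝕄.M, x = π.pair t ∧ Fo F t π z) (by
      apply Dfn.exM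
      apply Dfn.exM
      apply Dfn.exM
      exact (Dfn.eq (.var _) (.pair (.var _) (.var _))).and
        (Dfn.fo (.var _) (.var _) (.var _))) hc
  obtain ⟨b, hb, hb'⟩ := GBModel.coll (𝕄 := 𝕄)
    (R := fun x z => ∃ π ∈ 𝕄.M, ∃ t ∈ 𝕄.M, x = π.pair t ∧ Fo F t π z) hRdef hA
    (fun x hx => ((hA' x).1 hx).2)
  have hsub : ∀ x ∈ nameEval G σ, x ∈ b := by
    intro x hx
    obtain ⟨π, a, ha, hm, rfl⟩ := mem_nameEval.1 hx
    have hmM := 𝕄.transitive _ hσ _ hm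
    have hπ := GBModel.opair_left hmM
    have haM := GBModel.opair_right hmM
    obtain ⟨r, hr, t, ht, hE, hrt⟩ := gen_meets hG hq
      (R := fun r' => ∃ t ∈ U, (¬ Cp F t a ∨ ∃ z ∈ 𝕄.M, Fo F t π z) ∧ Le F r' t) (by
        apply Dfn.exIn (.const hU)
        apply Dfn.and _ (Dfn.le (.var _) (.var _))
        apply (Dfn.cp (.var _) (.const haM)).not.or
        apply Dfn.exM
        exact Dfn.fo (.var _) (.const hπ) (.var _))
      (fun r hr => by
        obtain ⟨r', hr', t, ht, hE, hrt⟩ := h2 _ hm r hr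
        exact ⟨r', hr', t, ht, hE π hπ a haM rfl, hrt⟩)
    have htG := gen_up hG hr hrt
    rcases hE with hE | ⟨z, hz, hf⟩
    · exact absurd (gen_cp hG htG ha) hE
    · have hmem : π.pair t ∈ A := by
        refine (hA' _).2 ⟨hc' _ ?_ _ ht, z, hz, π, hπ, t, P_sub hrt.right, rfl, hf⟩
        refine ZFSet.mem_sUnion.2 ⟨{π}, ?_, by simp⟩
        exact ZFSet.mem_sUnion.2 ⟨_, hm, by simp [ZFSet.pair]⟩
      obtain ⟨z', hz', π', _, t', _, e2, hf'⟩ := hb' _ hmem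
      obtain ⟨rfl, rfl⟩ := ZFSet.pair_inj.1 e2
      rw [Fo.sound hG hπ (𝕄.transitive _ hb _ hz') htG hf']
      exact hz'
  obtain ⟨x, hx, hx'⟩ := 𝕄.separation X hX.1 b hb
  refine hX.2 ⟨x, hx, ?_⟩
  ext z
  refine (hx' z).trans ⟨fun h => h.2, fun h => ⟨hsub z ?_, h⟩⟩
  rw [← e] at h
  exact h

end Helpers

/-- If `ℙ` is a pretame notion of class forcing for `𝕄 ⊨ GB⁻`, then no proper
class `X` of `𝕄` is turned into a set by forcing with `ℙ`. -/
theorem pretame_no_class_to_set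
    (𝕄 : GBModel) (F : ClassForcing 𝕄) (h : Pretame 𝕄 F)
    (X : Set ZFSet) (hX : IsProperClass 𝕄 X) :
    ¬ TurnsIntoSet 𝕄 F X := by
  rintro ⟨σ, hσ, _, G, hG, e⟩
  exact no_class_to_set h hX hσ hG e

end CF
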